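/- Let α ∈ (0,2) and β ∈ ℝ. Then there exists a constant C > 0 such that for every real t ≥ 0, |E_{α,β}(−t)| ≤ C (1 + t)^{-1}. -/

import Mathlib

/-- The two-parameter Mittag-Leffler function `E_{α,β}(z) = ∑_{n=0}^∞ z^n / Γ(nα+β)`. -/
noncomputable def mittagLeffler (α β : ℝ) (z : ℂ) : ℂ :=
  ∑' n : ℕ, z ^ n / Complex.Gamma ((n : ℂ) * α + β)

/-!
Write `1 / Γ(s)` as the inverse Laplace transform `(2πi)⁻¹ ∫ e^w w^(-s) dw` over `Re w = 1`, and
sum the Mittag-Leffler series under the integral sign: for `β > 1` and `|z| < 1`,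
`E_{α,β}(-z) = (2πi)⁻¹ ∫ e^w w^(α-β) / (w^α + z) dw`. On `Re w = 1` the argument of `w^α` is at
most `πα/2` in absolute value, so `|w^α + z| ≥ c (|w|^α + |z|)` as long as
`|arg z| ≤ δ < π - πα/2`. Hence the formula persists in this sector by analytic continuation, and
it gives the decay `O(1 / (1 + |z|))` when `β > 1 + α`.

For smaller `β`, descend with `E_{α,β} = α z E_{α,β+1}' + β E_{α,β+1}`. The derivative is controlled
by Cauchy's estimate at the cost of a slightly smaller sector. In the coordinate `ζ = log z` the
sector is the strip `|Im ζ| ≤ δ`, the operator `z d/dz` is `d/dζ`, and discs of a fixed radius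
suffice.
-/

open Asymptotics Filter MeasureTheory Set Topology

section ParametricIntegral

variable {T E : Type*} [MeasurableSpace T] {μ : Measure T} [NormedAddCommGroup E]
  [NormedSpace ℂ E] {U : Set ℂ} {F : ℂ → T → E}

theorem aestronglyMeasurable_deriv_of_isOpen (hU : IsOpen U)
    (hmeas : ∀ z ∈ U, AEStronglyMeasurable (F z) μ)
    (hdiff : ∀ᵐ t ∂μ, DifferentiableOn ℂ (fun z ↦ F z t) U) {z : ℂ} (hz : z ∈ U) :
    AEStronglyMeasurable (fun t ↦ deriv (fun w ↦ F w t) z) μ := by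
  have hquot (w : U) : AEStronglyMeasurable (fun t ↦ slope (fun w ↦ F w t) z w) μ := by
    simp only [slope_def_module]
    exact ((hmeas w w.2).sub (hmeas z hz)).const_smul _
  have hUz : U ∈ 𝓝[≠] z := nhdsWithin_le_nhds (hU.mem_nhds hz)
  have : (comap ((↑) : U → ℂ) (𝓝[≠] z)).NeBot :=
    comap_coe_neBot_of_le_principal (le_principal_iff.2 hUz)
  refine aestronglyMeasurable_of_tendsto_ae (comap ((↑) : U → ℂ) (𝓝[≠] z)) hquot ?_
  filter_upwards [hdiff] with t ht
  exact (hasDerivAt_iff_tendsto_slope.1 (ht.differentiableAt (hU.mem_nhds hz)).hasDerivAt).comp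
    tendsto_comap

theorem differentiableOn_integral_of_norm_le {bound : T → ℝ} (hU : IsOpen U)
    (hmeas : ∀ z ∈ U, AEStronglyMeasurable (F z) μ)
    (hdiff : ∀ᵐ t ∂μ, DifferentiableOn ℂ (fun z ↦ F z t) U)
    (hbound : ∀ᵐ t ∂μ, ∀ z ∈ U, ‖F z t‖ ≤ bound t) (hint : Integrable bound μ) :
    DifferentiableOn ℂ (fun z ↦ ∫ t, F z t ∂μ) U := by
  intro z hz
  obtain ⟨r, hr, hball⟩ := Metric.isOpen_iff.1 hU z hz
  have hsub {w : ℂ} (hw : w ∈ Metric.ball z (r / 2)) : Metric.closedBall w (r / 2) ⊆ U :=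
    fun v hv ↦ hball <| (Metric.mem_ball.2 <| (dist_triangle v w z).trans_lt <| by
      linarith [Metric.mem_closedBall.1 hv, Metric.mem_ball.1 hw])
  have hcauchy : ∀ᵐ t ∂μ, ∀ w ∈ Metric.ball z (r / 2),
      ‖deriv (fun w ↦ F w t) w‖ ≤ bound t / (r / 2) := by
    filter_upwards [hdiff, hbound] with t hdiff_t hbound_t w hw
    exact Complex.norm_deriv_le_of_forall_mem_sphere_norm_le (half_pos hr)
      (hdiff_t.diffContOnCl_ball (hsub hw))
      fun v hv ↦ hbound_t v (hsub hw (Metric.sphere_subset_closedBall hv))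
  refine ((hasDerivAt_integral_of_dominated_loc_of_deriv_le
    (Metric.ball_mem_nhds z (half_pos hr)) ?_ (hint.mono' (hmeas z hz) ?_)
    (aestronglyMeasurable_deriv_of_isOpen hU hmeas hdiff hz) hcauchy (hint.div_const _)
    ?_).2.differentiableAt).differentiableWithinAt
  · filter_upwards [hU.mem_nhds hz] with w hw using hmeas w hw
  · filter_upwards [hbound] with t ht using ht z hz
  · filter_upwards [hdiff] with t ht w hw
    have hwU : w ∈ U := hsub hw (Metric.mem_closedBall_self (half_pos hr).le)
    exact (ht.differentiableAt (hU.mem_nhds hwU)).hasDerivAt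

end ParametricIntegral

section Laplace

theorem differentiableOn_integral_cpow_mul_cexp_neg_mul_Ioi {a : ℂ} (ha : 0 < a.re) {b : ℝ}
    (hb : 0 < b) :
    DifferentiableOn ℂ (fun r : ℂ ↦ ∫ t : ℝ in Ioi 0, (t : ℂ) ^ (a - 1) * Complex.exp (-(r * t)))
      {r | b < r.re} := by
  refine differentiableOn_integral_of_norm_le (bound := fun t ↦ t ^ (a.re - 1) * Real.exp (-b * t))
    (isOpen_lt continuous_const Complex.continuous_re) (fun r _ ↦ ?_)
    (Eventually.of_forall fun t ↦ by fun_prop) ?_ ?_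
  · exact Measurable.aestronglyMeasurable (by fun_prop)
  · filter_upwards [ae_restrict_mem measurableSet_Ioi] with t (ht : 0 < t) r (hr : b < r.re)
    rw [norm_mul, Complex.norm_cpow_eq_rpow_re_of_pos ht, Complex.norm_exp, Complex.neg_re,
      Complex.re_mul_ofReal, neg_mul, Complex.sub_re, Complex.one_re]
    gcongr
  · simpa [IntegrableOn] using
      integrableOn_rpow_mul_exp_neg_mul_rpow (p := 1) (s := a.re - 1) (by linarith) one_pos hb

theorem integral_cpow_mul_cexp_neg_mul_Ioi {a r : ℂ} (ha : 0 < a.re) (hr : 0 < r.re) :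
    ∫ t : ℝ in Ioi 0, (t : ℂ) ^ (a - 1) * Complex.exp (-(r * t)) =
      r ^ (-a) * Complex.Gamma a := by
  have hopen : IsOpen {z : ℂ | r.re / 2 < z.re} := isOpen_lt continuous_const Complex.continuous_re
  have hdiff : DifferentiableOn ℂ (fun z : ℂ ↦ z ^ (-a) * Complex.Gamma a)
      {z | r.re / 2 < z.re} := fun z (hz : r.re / 2 < z.re) ↦
    ((differentiableAt_id.cpow_const (Or.inl ((half_pos hr).trans hz))).mul_const
      _).differentiableWithinAt
  have hreal (x : ℝ) (hx : 0 < x) : ∫ t : ℝ in Ioi 0, (t : ℂ) ^ (a - 1) *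
      Complex.exp (-(x * t)) = (x : ℂ) ^ (-a) * Complex.Gamma a := by
    rw [Complex.integral_cpow_mul_exp_neg_mul_Ioi ha hx, one_div, Complex.cpow_neg,
      Complex.inv_cpow _ _ (Complex.slitPlane_arg_ne_pi (Complex.ofReal_mem_slitPlane.2 hx))]
  have hfreq : ∃ᶠ x : ℝ in 𝓝[≠] r.re, 0 < x :=
    (eventually_nhdsWithin_of_eventually_nhds (lt_mem_nhds hr)).frequently
  have hofReal : Tendsto ((↑) : ℝ → ℂ) (𝓝[≠] r.re) (𝓝[≠] (r.re : ℂ)) :=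
    Complex.continuous_ofReal.continuousWithinAt.tendsto_nhdsWithin fun x hx ↦ by simpa using hx
  exact AnalyticOnNhd.eqOn_of_preconnected_of_frequently_eq (z₀ := (r.re : ℂ))
    ((differentiableOn_integral_cpow_mul_cexp_neg_mul_Ioi ha (half_pos hr)).analyticOnNhd hopen)
    (hdiff.analyticOnNhd hopen) (convex_halfSpace_re_gt _).isPreconnected
    (half_lt_self hr) (hofReal.frequently (hfreq.mono hreal)) (half_lt_self hr)

end Laplace

section VerticalLine

/-- The vertical line `Re w = 1`, parametrised by `y ↦ 1 + 2πiy`: with this scaling `dw / (2πi)`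
is `dy`, and the Laplace transform on the line is the Fourier transform in Mathlib's
normalisation. -/
noncomputable def verticalLine (y : ℝ) : ℂ := 1 + 2 * Real.pi * y * Complex.I

theorem verticalLine_re (y : ℝ) : (verticalLine y).re = 1 := by simp [verticalLine]

theorem verticalLine_mem_slitPlane (y : ℝ) : verticalLine y ∈ Complex.slitPlane :=
  Or.inl (by simp [verticalLine_re])

theorem verticalLine_ne_zero (y : ℝ) : verticalLine y ≠ 0 :=
  Complex.slitPlane_ne_zero (verticalLine_mem_slitPlane y)

theorem one_le_norm_verticalLine (y : ℝ) : 1 ≤ ‖verticalLine y‖ := by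
  simpa [verticalLine_re] using Complex.re_le_norm (verticalLine y)

@[fun_prop]
theorem continuous_verticalLine : Continuous verticalLine := by
  unfold verticalLine; fun_prop

@[fun_prop]
theorem continuous_verticalLine_cpow (c : ℂ) : Continuous fun y ↦ verticalLine y ^ c :=
  continuous_verticalLine.cpow continuous_const verticalLine_mem_slitPlane

theorem norm_exp_verticalLine (y : ℝ) : ‖Complex.exp (verticalLine y)‖ = Real.exp 1 := by
  rw [Complex.norm_exp, verticalLine_re]

theorem norm_verticalLine_eq_rpow (y : ℝ) :
    ‖verticalLine y‖ = (1 + ‖2 * Real.pi * y‖ ^ 2) ^ (1 / 2 : ℝ) := by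
  rw [← Real.sqrt_eq_rpow, Complex.norm_eq_sqrt_sq_add_sq, verticalLine_re]
  simp [verticalLine, mul_pow]

theorem integrable_norm_verticalLine_rpow {s : ℝ} (hs : s < -1) :
    Integrable fun y ↦ ‖verticalLine y‖ ^ s := by
  have h : Integrable fun y : ℝ ↦ (1 + ‖y‖ ^ 2) ^ (-(-s) / 2) :=
    integrable_rpow_neg_one_add_norm_sq (by simpa using lt_neg.1 hs)
  refine (h.comp_mul_left' (R := 2 * Real.pi) (by positivity)).congr
    (Eventually.of_forall fun y ↦ ?_)
  simp only [norm_verticalLine_eq_rpow]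
  rw [← Real.rpow_mul (by positivity)]
  ring_nf

theorem integrable_verticalLine_cpow {s : ℂ} (hs : s.re < -1) :
    Integrable fun y ↦ verticalLine y ^ s := by
  refine ((integrable_norm_verticalLine_rpow hs).mul_const (Real.exp (Real.pi * |s.im|))).mono'
    (continuous_verticalLine_cpow s).aestronglyMeasurable
    (Eventually.of_forall fun y ↦ (Complex.norm_cpow_le _ _).trans ?_)
  rw [div_eq_mul_inv, ← Real.exp_neg]
  gcongr
  calc -((verticalLine y).arg * s.im) ≤ |(verticalLine y).arg| * |s.im| := by
        rw [← abs_mul]; exact neg_le_abs _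
    _ ≤ Real.pi * |s.im| := by gcongr; exact Complex.abs_arg_le_pi _

end VerticalLine

section GammaInversion

open FourierTransform

/-- The integrand `t ^ (s - 1) * exp (-t)` of `Γ(s)`, extended by zero to the real line. -/
noncomputable def gammaIntegrand (s : ℂ) : ℝ → ℂ :=
  (Ioi 0).indicator fun t ↦ (t : ℂ) ^ (s - 1) * Complex.exp (-t)

theorem integrable_gammaIntegrand {s : ℂ} (hs : 0 < s.re) : Integrable (gammaIntegrand s) := by
  refine (integrable_indicator_iff measurableSet_Ioi).2 ?_
  simpa [mul_comm] using Complex.GammaIntegral_convergent hs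

theorem continuousAt_gammaIntegrand (s : ℂ) {t : ℝ} (ht : 0 < t) :
    ContinuousAt (gammaIntegrand s) t :=
  ((Complex.continuousAt_ofReal_cpow_const t (s - 1) (Or.inr ht.ne')).mul (by fun_prop)).congr
    (eqOn_indicator.symm.eventuallyEq_of_mem (Ioi_mem_nhds ht))

theorem fourier_gammaIntegrand {s : ℂ} (hs : 0 < s.re) :
    𝓕 (gammaIntegrand s) = fun y ↦ verticalLine y ^ (-s) * Complex.Gamma s := by
  ext y
  rw [Real.fourier_real_eq_integral_exp_smul, ← integral_cpow_mul_cexp_neg_mul_Ioi hs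
    (by simp [verticalLine_re]), ← integral_indicator measurableSet_Ioi]
  congr 1 with t
  rw [gammaIntegrand, smul_eq_mul, ← indicator_mul_right (s := Ioi 0)
    (f := fun t ↦ Complex.exp (((-2 * Real.pi * t * y : ℝ) : ℂ) * Complex.I))]
  congr 2 with t
  rw [mul_left_comm, ← Complex.exp_add, verticalLine]
  push_cast
  ring_nf

theorem inv_Gamma_eq_integral_verticalLine {s : ℂ} (hs : 1 < s.re) :
    (Complex.Gamma s)⁻¹ = ∫ y, Complex.exp (verticalLine y) * verticalLine y ^ (-s) := by
  have hs0 : 0 < s.re := one_pos.trans hs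
  have hline : Integrable fun y ↦ verticalLine y ^ (-s) * Complex.Gamma s :=
    (integrable_verticalLine_cpow (by simpa using hs)).mul_const _
  have hinv : 𝓕⁻ (𝓕 (gammaIntegrand s)) 1 = Complex.exp (-1) :=
    ((integrable_gammaIntegrand hs0).fourierInv_fourier_eq (by rwa [fourier_gammaIntegrand hs0])
      (continuousAt_gammaIntegrand s one_pos)).trans (by simp [gammaIntegrand])
  have hexp (y : ℝ) : Complex.exp (verticalLine y) =
      Complex.exp 1 * Complex.exp ((2 * Real.pi * inner ℝ y 1 : ℝ) * Complex.I) := by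
    rw [← Complex.exp_add]
    simp [verticalLine, mul_assoc]
  refine (eq_inv_of_mul_eq_one_left ?_).symm
  calc _ = Complex.exp 1 * 𝓕⁻ (𝓕 (gammaIntegrand s)) 1 := by
        rw [fourier_gammaIntegrand hs0, Real.fourierInv_eq', ← integral_const_mul,
          ← integral_mul_const]
        congr 1 with y
        rw [hexp, smul_eq_mul]
        ring
    _ = 1 := by rw [hinv, ← Complex.exp_add]; simp

end GammaInversion

section Series

theorem rpow_mul_exp_neg_le_Gamma {M x : ℝ} (hM : 0 ≤ M) (hx : 1 ≤ x) :
    M ^ (x - 1) * Real.exp (-M) ≤ Real.Gamma x := by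
  have hint := Real.GammaIntegral_convergent (one_pos.trans_le hx)
  calc M ^ (x - 1) * Real.exp (-M) = ∫ t in Ioi M, Real.exp (-t) * M ^ (x - 1) := by
        rw [integral_mul_const, integral_exp_neg_Ioi, mul_comm]
    _ ≤ ∫ t in Ioi M, Real.exp (-t) * t ^ (x - 1) := by
        refine setIntegral_mono_on ((integrableOn_exp_neg_Ioi M).mul_const _)
          (hint.mono_set (Ioi_subset_Ioi hM)) measurableSet_Ioi fun t (ht : M < t) ↦ ?_
        gcongr
    _ ≤ ∫ t in Ioi 0, Real.exp (-t) * t ^ (x - 1) := by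
        refine setIntegral_mono_set hint ?_ (Ioi_subset_Ioi hM).eventuallyLE
        filter_upwards [ae_restrict_mem measurableSet_Ioi] with t (ht : 0 < t)
        simp only [Pi.zero_apply]
        positivity
    _ = Real.Gamma x := (Real.Gamma_eq_integral (one_pos.trans_le hx)).symm

theorem norm_pow_div_Gamma_le {α β M : ℝ} (hM : 0 < M) {n : ℕ} (hn : 1 ≤ n * α + β) (z : ℂ) :
    ‖z ^ n / Complex.Gamma ((n : ℂ) * α + β)‖ ≤
      Real.exp M * M ^ (1 - β) * (‖z‖ / M ^ α) ^ n := by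
  have hΓ := rpow_mul_exp_neg_le_Gamma hM.le hn
  have hpos : 0 < M ^ (n * α + β - 1) * Real.exp (-M) := by positivity
  have hpow : M ^ (n * α + β - 1) = (M ^ α) ^ n * (M ^ (1 - β))⁻¹ := by
    rw [← Real.rpow_natCast, ← Real.rpow_mul hM.le, ← Real.rpow_neg hM.le, ← Real.rpow_add hM]
    ring_nf
  have hcast : (n : ℂ) * α + β = ((n * α + β : ℝ) : ℂ) := by push_cast; rfl
  rw [hcast, Complex.Gamma_ofReal, norm_div, norm_pow, Complex.norm_real,
    Real.norm_of_nonneg (hpos.le.trans hΓ)]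
  calc ‖z‖ ^ n / Real.Gamma (n * α + β) ≤ ‖z‖ ^ n / (M ^ (n * α + β - 1) * Real.exp (-M)) := by
        gcongr
    _ = Real.exp M * M ^ (1 - β) * (‖z‖ / M ^ α) ^ n := by
        rw [hpow, Real.exp_neg, div_pow]
        field_simp

theorem summable_norm_pow_div_Gamma {α : ℝ} (hα : 0 < α) (β : ℝ) (z : ℂ) :
    Summable fun n : ℕ ↦ ‖z ^ n / Complex.Gamma ((n : ℂ) * α + β)‖ := by
  obtain ⟨M, hMz, hM⟩ : ∃ M : ℝ, ‖z‖ < M ^ α ∧ 0 < M :=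
    (((tendsto_rpow_atTop hα).eventually_gt_atTop ‖z‖).and (eventually_gt_atTop 0)).exists
  have hratio : ‖z‖ / M ^ α < 1 := (div_lt_one (by positivity)).2 hMz
  refine Summable.of_norm_bounded_eventually_nat
    ((summable_geometric_of_lt_one (by positivity) hratio).mul_left
      (Real.exp M * M ^ (1 - β))) ?_
  have hev : ∀ᶠ n : ℕ in atTop, 1 ≤ (n : ℝ) * α + β :=
    (tendsto_atTop_add_const_right _ β
      (tendsto_natCast_atTop_atTop.atTop_mul_const hα)).eventually_ge_atTop 1
  filter_upwards [hev] with n hn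
  rw [norm_norm]
  exact norm_pow_div_Gamma_le hM hn z

theorem hasSum_mittagLeffler {α : ℝ} (hα : 0 < α) (β : ℝ) (z : ℂ) :
    HasSum (fun n : ℕ ↦ z ^ n / Complex.Gamma ((n : ℂ) * α + β)) (mittagLeffler α β z) :=
  (summable_norm_pow_div_Gamma hα β z).of_norm.hasSum

theorem norm_pow_div_le_of_mem_ball {R : ℝ} {z : ℂ} (hz : z ∈ Metric.ball (0 : ℂ) R) (n : ℕ)
    (g : ℂ) : ‖z ^ n / g‖ ≤ ‖(R : ℂ) ^ n / g‖ := by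
  have hzR : ‖z‖ < R := by simpa using hz
  have hR : 0 ≤ R := (norm_nonneg z).trans hzR.le
  rw [norm_div, norm_div, norm_pow, norm_pow, Complex.norm_real, Real.norm_of_nonneg hR]
  gcongr

theorem differentiable_mittagLeffler {α : ℝ} (hα : 0 < α) (β : ℝ) :
    Differentiable ℂ (mittagLeffler α β) := by
  intro z
  have hz : z ∈ Metric.ball (0 : ℂ) (‖z‖ + 1) := by simp
  exact (Complex.differentiableOn_tsum_of_summable_norm
    (summable_norm_pow_div_Gamma hα β ((‖z‖ + 1 : ℝ) : ℂ))
    (fun n ↦ by fun_prop) Metric.isOpen_ball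
    fun n w hw ↦ norm_pow_div_le_of_mem_ball hw n _).differentiableAt
      (Metric.isOpen_ball.mem_nhds hz)

theorem mittagLeffler_eq_deriv_add {α : ℝ} (hα : 0 < α) (β : ℝ) (z : ℂ) :
    mittagLeffler α β z =
      α * z * deriv (mittagLeffler α (β + 1)) z + β * mittagLeffler α (β + 1) z := by
  have hz : z ∈ Metric.ball (0 : ℂ) (‖z‖ + 1) := by simp
  have hderiv := Complex.hasSum_deriv_of_summable_norm
    (summable_norm_pow_div_Gamma hα (β + 1) ((‖z‖ + 1 : ℝ) : ℂ))
    (F := fun (n : ℕ) (z : ℂ) ↦ z ^ n / Complex.Gamma ((n : ℂ) * α + (β + 1 : ℝ)))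
    (fun n ↦ by fun_prop) Metric.isOpen_ball
    (fun n w hw ↦ norm_pow_div_le_of_mem_ball hw n _) hz
  have hterm (n : ℕ) :
      z * deriv (fun z : ℂ ↦ z ^ n / Complex.Gamma ((n : ℂ) * α + (β + 1 : ℝ))) z =
        n * (z ^ n / Complex.Gamma ((n : ℂ) * α + (β + 1 : ℝ))) := by
    rw [deriv_div_const, deriv_pow_field]
    cases n with
    | zero => simp
    | succ k => rw [Nat.add_sub_cancel]; ring
  refine (hasSum_mittagLeffler hα β z).unique (((hderiv.mul_left (α * z : ℂ)).add
    ((hasSum_mittagLeffler hα (β + 1) z).mul_left (β : ℂ))).congr_fun fun n ↦ ?_)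
  rw [mul_assoc (α : ℂ), hterm, div_eq_mul_inv _ (Complex.Gamma (n * α + β)),
    Complex.one_div_Gamma_eq_self_mul_one_div_Gamma_add_one]
  push_cast
  rw [add_assoc]
  ring

end Series

section Resolvent

theorem cos_half_im_sub_mul_le_norm_exp_add_exp (a b : ℂ) :
    Real.cos ((a.im - b.im) / 2) * (Real.exp a.re + Real.exp b.re) ≤
      ‖Complex.exp a + Complex.exp b‖ := by
  set u : ℂ := Complex.exp (((-(a.im + b.im) / 2 : ℝ) : ℂ) * Complex.I) with hu
  have hre : (u * (Complex.exp a + Complex.exp b)).re =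
      Real.cos ((a.im - b.im) / 2) * (Real.exp a.re + Real.exp b.re) := by
    have hb : Real.cos (-(a.im + b.im) / 2 + b.im) = Real.cos ((a.im - b.im) / 2) := by
      rw [← Real.cos_neg]
      ring_nf
    rw [hu, mul_add, ← Complex.exp_add, ← Complex.exp_add, Complex.add_re, Complex.exp_re,
      Complex.exp_re, Complex.add_im, Complex.add_im, Complex.add_re, Complex.add_re,
      Complex.re_ofReal_mul, Complex.im_ofReal_mul, Complex.I_re, Complex.I_im, mul_zero, mul_one,
      zero_add, zero_add, hb]
    ring_nf
  calc _ = (u * (Complex.exp a + Complex.exp b)).re := hre.symm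
    _ ≤ ‖u * (Complex.exp a + Complex.exp b)‖ := Complex.re_le_norm _
    _ = ‖Complex.exp a + Complex.exp b‖ := by
        rw [norm_mul, hu, Complex.norm_exp_ofReal_mul_I, one_mul]

theorem exists_mul_le_norm_cpow_add_exp {α δ : ℝ} (hα : 0 ≤ α)
    (hδ : δ < Real.pi - Real.pi * α / 2) :
    ∃ c > 0, ∀ w : ℂ, w ≠ 0 → 0 ≤ w.re → ∀ ζ : ℂ, |ζ.im| ≤ δ →
      c * (‖w‖ ^ α + Real.exp ζ.re) ≤ ‖w ^ (α : ℂ) + Complex.exp ζ‖ := by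
  rcases lt_or_ge δ 0 with hneg | hδ0
  · exact ⟨1, one_pos, fun _ _ _ ζ hζ ↦ absurd (hζ.trans_lt hneg) (abs_nonneg _).not_gt⟩
  have hθ : 0 ≤ Real.pi * α / 2 + δ := by positivity
  refine ⟨Real.cos ((Real.pi * α / 2 + δ) / 2),
    Real.cos_pos_of_mem_Ioo ⟨by linarith [Real.pi_pos], by linarith⟩, fun w hw hre ζ hζ ↦ ?_⟩
  have hpow : w ^ (α : ℂ) = Complex.exp (Complex.log w * α) := Complex.cpow_def_of_ne_zero hw α
  have hnorm : ‖w‖ ^ α = Real.exp (Complex.log w * α).re := by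
    rw [Complex.re_mul_ofReal, Complex.log_re, Real.rpow_def_of_pos (norm_pos_iff.2 hw)]
  have hangle : |(Complex.log w * α).im - ζ.im| ≤ Real.pi * α / 2 + δ := by
    rw [Complex.im_mul_ofReal, Complex.log_im]
    calc |w.arg * α - ζ.im| ≤ |w.arg| * α + |ζ.im| := by
          simpa [abs_mul, abs_of_nonneg hα] using abs_sub (w.arg * α) ζ.im
      _ ≤ Real.pi / 2 * α + δ := by gcongr; exact Complex.abs_arg_le_pi_div_two_iff.2 hre
      _ = Real.pi * α / 2 + δ := by ring
  refine le_trans ?_ (hpow ▸ cos_half_im_sub_mul_le_norm_exp_add_exp _ ζ)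
  rw [hnorm, ← Real.cos_abs (((Complex.log w * α).im - ζ.im) / 2), abs_div, abs_two]
  gcongr
  exact Real.cos_le_cos_of_nonneg_of_le_pi (by positivity) (by linarith [Real.pi_pos])
    (by gcongr)

theorem hasSum_neg_pow_mul_cpow {α β w z : ℂ} (hw : w ≠ 0) (hz : ‖z‖ < ‖w ^ α‖) :
    HasSum (fun n : ℕ ↦ (-z) ^ n * w ^ (-(n * α + β))) (w ^ (α - β) / (w ^ α + z)) := by
  have hwα : w ^ α ≠ 0 := norm_pos_iff.1 ((norm_nonneg z).trans_lt hz)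
  have hratio : ‖-z / w ^ α‖ < 1 := by
    rwa [norm_div, norm_neg, div_lt_one (norm_pos_iff.2 hwα)]
  have hsum : w ^ (α - β) / (w ^ α + z) = w ^ (-β) * (1 - -z / w ^ α)⁻¹ := by
    rw [one_sub_div hwα, inv_div, sub_neg_eq_add, sub_eq_add_neg, Complex.cpow_add _ _ hw]
    ring
  rw [hsum]
  refine ((hasSum_geometric_of_norm_lt_one hratio).mul_left (w ^ (-β))).congr_fun fun n ↦ ?_
  rw [neg_add, Complex.cpow_add _ _ hw, Complex.cpow_neg, Complex.cpow_nat_mul, div_pow]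
  ring

end Resolvent

section LineIntegral

/-- The integrand of the Bromwich integral
`E_{α,β}(-z) = (2πi)⁻¹ ∫_{Re w = 1} e^w w^(α-β) / (w^α + z) dw`. -/
noncomputable def bromwichIntegrand (α β : ℝ) (z : ℂ) (y : ℝ) : ℂ :=
  Complex.exp (verticalLine y) *
    (verticalLine y ^ ((α - β : ℝ) : ℂ) / (verticalLine y ^ (α : ℂ) + z))

theorem measurable_bromwichIntegrand (α β : ℝ) (z : ℂ) : Measurable (bromwichIntegrand α β z) :=
  (by fun_prop : Continuous fun y ↦ Complex.exp (verticalLine y)).measurable.mul <|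
    (continuous_verticalLine_cpow _).measurable.div
      ((continuous_verticalLine_cpow _).measurable.add_const z)

theorem mittagLeffler_neg_eq_integral_of_norm_lt_one {α β : ℝ} (hα : 0 < α) (hβ : 1 < β) {z : ℂ}
    (hz : ‖z‖ < 1) : mittagLeffler α β (-z) = ∫ y, bromwichIntegrand α β z y := by
  have hpow {a : ℝ} (ha : 0 ≤ a) (y : ℝ) : 1 ≤ ‖verticalLine y‖ ^ a :=
    Real.one_le_rpow (one_le_norm_verticalLine y) ha
  have hsum (y : ℝ) : HasSum (fun n : ℕ ↦ (-z) ^ n *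
      (Complex.exp (verticalLine y) * verticalLine y ^ (-(n * α + β : ℂ))))
      (bromwichIntegrand α β z y) := by
    have := (hasSum_neg_pow_mul_cpow (α := α) (β := β) (verticalLine_ne_zero y)
      (hz.trans_le (by simpa [Complex.norm_cpow_real] using hpow hα.le y))).mul_left
        (Complex.exp (verticalLine y))
    simpa only [bromwichIntegrand, Complex.ofReal_sub, mul_left_comm] using this
  have hterm (n : ℕ) (y : ℝ) : ‖(-z) ^ n *
      (Complex.exp (verticalLine y) * verticalLine y ^ (-(n * α + β : ℂ)))‖ ≤
        ‖z‖ ^ n * (Real.exp 1 * ‖verticalLine y‖ ^ (-β)) := by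
    have hcast : -(n * α + β : ℂ) = ((-(n * α + β) : ℝ) : ℂ) := by push_cast; rfl
    rw [hcast, norm_mul, norm_mul, norm_exp_verticalLine, Complex.norm_cpow_real, norm_pow,
      norm_neg]
    have := one_le_norm_verticalLine y
    gcongr
    linarith [show 0 ≤ n * α by positivity]
  refine (hasSum_mittagLeffler hα β (-z)).unique ((hasSum_integral_of_dominated_convergence
    (fun n y ↦ ‖z‖ ^ n * (Real.exp 1 * ‖verticalLine y‖ ^ (-β)))
    (fun n ↦ Continuous.aestronglyMeasurable (by fun_prop))
    (fun n ↦ Eventually.of_forall (hterm n))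
    (Eventually.of_forall fun y ↦
      (summable_geometric_of_lt_one (norm_nonneg z) hz).mul_right _) ?_
    (Eventually.of_forall hsum)).congr_fun fun n ↦ ?_)
  · simp only [tsum_mul_right]
    exact ((integrable_norm_verticalLine_rpow (neg_lt_neg hβ)).const_mul _).const_mul _
  · rw [integral_const_mul, ← inv_Gamma_eq_integral_verticalLine, div_eq_mul_inv]
    simpa using hβ.trans_le (le_add_of_nonneg_left (by positivity))

theorem exists_norm_bromwichIntegrand_exp_le {α δ : ℝ} (hα : 0 ≤ α)
    (hδ : δ < Real.pi - Real.pi * α / 2) (β : ℝ) :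
    ∃ C > 0, ∀ ζ : ℂ, |ζ.im| ≤ δ → ∀ y, ‖bromwichIntegrand α β (Complex.exp ζ) y‖ ≤
      C * (‖verticalLine y‖ ^ (α - β) / (‖verticalLine y‖ ^ α + Real.exp ζ.re)) := by
  obtain ⟨c, hc, hle⟩ := exists_mul_le_norm_cpow_add_exp hα hδ
  refine ⟨Real.exp 1 / c, by positivity, fun ζ hζ y ↦ ?_⟩
  rw [bromwichIntegrand, norm_mul, norm_div, norm_exp_verticalLine, Complex.norm_cpow_real,
    div_mul_div_comm, ← mul_div_assoc]
  gcongr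
  exact hle _ (verticalLine_ne_zero y) (by simp [verticalLine_re]) ζ hζ

theorem verticalLine_cpow_add_exp_ne_zero {α : ℝ} (hα : 0 ≤ α) {ζ : ℂ}
    (hζ : |ζ.im| < Real.pi - Real.pi * α / 2) (y : ℝ) :
    verticalLine y ^ (α : ℂ) + Complex.exp ζ ≠ 0 := by
  obtain ⟨c, hc, hle⟩ := exists_mul_le_norm_cpow_add_exp hα hζ
  refine norm_pos_iff.1 (lt_of_lt_of_le ?_ (hle _ (verticalLine_ne_zero y)
    (by simp [verticalLine_re]) ζ le_rfl))
  positivity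

theorem differentiableOn_integral_bromwichIntegrand_exp {α β δ : ℝ} (hα : 0 ≤ α) (hβ : 1 < β)
    (hδ : δ < Real.pi - Real.pi * α / 2) :
    DifferentiableOn ℂ (fun ζ ↦ ∫ y, bromwichIntegrand α β (Complex.exp ζ) y) {ζ | |ζ.im| < δ} := by
  obtain ⟨C, hC, hbound⟩ := exists_norm_bromwichIntegrand_exp_le hα hδ β
  refine differentiableOn_integral_of_norm_le (bound := fun y ↦ C * ‖verticalLine y‖ ^ (-β))
    (isOpen_lt (by fun_prop) continuous_const)
    (fun ζ _ ↦ (measurable_bromwichIntegrand α β _).aestronglyMeasurable)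
    (Eventually.of_forall fun y ζ (hζ : |ζ.im| < δ) ↦ ?_)
    (Eventually.of_forall fun y ζ (hζ : |ζ.im| < δ) ↦ (hbound ζ hζ.le y).trans ?_)
    ((integrable_norm_verticalLine_rpow (neg_lt_neg hβ)).const_mul C)
  · have hden : DifferentiableAt ℂ (fun ζ ↦ verticalLine y ^ (α : ℂ) + Complex.exp ζ) ζ := by
      fun_prop
    exact (((differentiableAt_const _).div hden
      (verticalLine_cpow_add_exp_ne_zero hα (hζ.trans hδ) y)).const_mul _).differentiableWithinAt
  · have hpos : 0 < ‖verticalLine y‖ := norm_pos_iff.2 (verticalLine_ne_zero y)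
    calc _ ≤ C * (‖verticalLine y‖ ^ (α - β) / ‖verticalLine y‖ ^ α) := by
          gcongr
          exact le_add_of_nonneg_right (Real.exp_pos _).le
      _ = C * ‖verticalLine y‖ ^ (-β) := by rw [← Real.rpow_sub hpos, sub_sub_cancel_left]

theorem mittagLeffler_neg_exp_eq_integral {α β : ℝ} (hα : 0 < α) (hβ : 1 < β) {ζ : ℂ}
    (hζ : |ζ.im| < Real.pi - Real.pi * α / 2) :
    mittagLeffler α β (-Complex.exp ζ) = ∫ y, bromwichIntegrand α β (Complex.exp ζ) y := by
  obtain ⟨δ, hζδ, hδ⟩ := exists_between hζ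
  have hopen : IsOpen {ζ : ℂ | |ζ.im| < δ} := isOpen_lt (by fun_prop) continuous_const
  have hconv : Convex ℝ {ζ : ℂ | |ζ.im| < δ} := by
    simpa [Set.preimage, abs_lt] using (convex_Ioo (-δ) δ).linear_preimage Complex.imLm
  have hdiff : Differentiable ℂ fun ζ ↦ mittagLeffler α β (-Complex.exp ζ) :=
    (differentiable_mittagLeffler hα β).comp (by fun_prop)
  have hnear : (fun ζ ↦ mittagLeffler α β (-Complex.exp ζ)) =ᶠ[𝓝 (-1)]
      fun ζ ↦ ∫ y, bromwichIntegrand α β (Complex.exp ζ) y := by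
    filter_upwards [(isOpen_lt Complex.continuous_re continuous_const).mem_nhds
      (show (-1 : ℂ).re < 0 by simp)] with ξ (hξ : ξ.re < 0)
    exact mittagLeffler_neg_eq_integral_of_norm_lt_one hα hβ
      (by rwa [Complex.norm_exp, Real.exp_lt_one_iff])
  exact AnalyticOnNhd.eqOn_of_preconnected_of_eventuallyEq
    (hdiff.differentiableOn.analyticOnNhd hopen)
    ((differentiableOn_integral_bromwichIntegrand_exp hα.le hβ hδ).analyticOnNhd hopen)
    hconv.isPreconnected (by simpa using (abs_nonneg _).trans_lt hζδ) hnear hζδ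

end LineIntegral

section Decay

theorem isBigO_mittagLeffler_neg_exp_of_one_add_lt {α β δ : ℝ} (hα : 0 < α) (hβ : 1 + α < β)
    (hδ : δ < Real.pi - Real.pi * α / 2) :
    (fun ζ ↦ mittagLeffler α β (-Complex.exp ζ)) =O[𝓟 {ζ | |ζ.im| ≤ δ}]
      fun ζ ↦ (1 + Real.exp ζ.re)⁻¹ := by
  obtain ⟨C, hC, hbound⟩ := exists_norm_bromwichIntegrand_exp_le hα.le hδ β
  have hint : Integrable fun y ↦ C * ‖verticalLine y‖ ^ (α - β) :=
    (integrable_norm_verticalLine_rpow (by linarith)).const_mul C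
  refine IsBigO.of_bound (∫ y, C * ‖verticalLine y‖ ^ (α - β)) <|
    eventually_principal.2 fun ζ (hζ : |ζ.im| ≤ δ) ↦ ?_
  rw [mittagLeffler_neg_exp_eq_integral hα (by linarith) (hζ.trans_lt hδ),
    Real.norm_of_nonneg (by positivity), ← integral_mul_const]
  refine norm_integral_le_of_norm_le (hint.mul_const _)
    (Eventually.of_forall fun y ↦ (hbound ζ hζ y).trans ?_)
  rw [mul_assoc, div_eq_mul_inv]
  gcongr
  exact Real.one_le_rpow (one_le_norm_verticalLine y) hα.le

theorem inv_one_add_exp_le {r x y : ℝ} (hr : 0 ≤ r) (hxy : x ≤ r + y) :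
    (1 + Real.exp y)⁻¹ ≤ Real.exp r * (1 + Real.exp x)⁻¹ := by
  rw [← div_eq_mul_inv, le_div_iff₀ (by positivity), inv_mul_le_iff₀ (by positivity)]
  calc 1 + Real.exp x ≤ Real.exp r + Real.exp (r + y) := by
        gcongr
        exact Real.one_le_exp hr
    _ = (1 + Real.exp y) * Real.exp r := by rw [Real.exp_add]; ring

theorem isBigO_deriv_of_isBigO_inv_one_add_exp_re {E : Type*} [NormedAddCommGroup E]
    [NormedSpace ℂ E] {f : ℂ → E} {δ δ' : ℝ} (hδ : δ < δ')
    (hf : DifferentiableOn ℂ f {ζ | |ζ.im| ≤ δ'})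
    (hO : f =O[𝓟 {ζ | |ζ.im| ≤ δ'}] fun ζ ↦ (1 + Real.exp ζ.re)⁻¹) :
    deriv f =O[𝓟 {ζ | |ζ.im| ≤ δ}] fun ζ ↦ (1 + Real.exp ζ.re)⁻¹ := by
  obtain ⟨C, hC, hbound⟩ := hO.exists_pos
  rw [isBigOWith_principal] at hbound
  have hr : 0 < δ' - δ := sub_pos.2 hδ
  refine IsBigO.of_bound (C * Real.exp (δ' - δ) / (δ' - δ)) <|
    eventually_principal.2 fun ζ (hζ : |ζ.im| ≤ δ) ↦ ?_
  have hball : Metric.closedBall ζ (δ' - δ) ⊆ {ζ | |ζ.im| ≤ δ'} := fun ξ hξ ↦ by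
    have := (Complex.abs_im_le_norm (ξ - ζ)).trans (mem_closedBall_iff_norm.1 hξ)
    rw [Complex.sub_im] at this
    have := (abs_sub_abs_le_abs_sub ξ.im ζ.im).trans this
    change |ξ.im| ≤ δ'
    linarith
  have hsphere : ∀ ξ ∈ Metric.sphere ζ (δ' - δ),
      ‖f ξ‖ ≤ C * (Real.exp (δ' - δ) * (1 + Real.exp ζ.re)⁻¹) := fun ξ hξ ↦ by
    refine (hbound ξ (hball (Metric.sphere_subset_closedBall hξ))).trans ?_
    have hre : ζ.re ≤ δ' - δ + ξ.re := by
      have := (neg_le_abs _).trans ((Complex.abs_re_le_norm (ξ - ζ)).trans_eq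
        (mem_sphere_iff_norm.1 hξ))
      rw [Complex.sub_re] at this
      linarith
    rw [Real.norm_of_nonneg (by positivity)]
    gcongr
    exact inv_one_add_exp_le hr.le hre
  refine (Complex.norm_deriv_le_of_forall_mem_sphere_norm_le hr (hf.diffContOnCl_ball hball)
    hsphere).trans_eq ?_
  rw [Real.norm_of_nonneg (by positivity)]
  ring

theorem mittagLeffler_neg_exp_eq_deriv_add {α : ℝ} (hα : 0 < α) (β : ℝ) (ζ : ℂ) :
    mittagLeffler α β (-Complex.exp ζ) =
      α * deriv (fun ξ ↦ mittagLeffler α (β + 1) (-Complex.exp ξ)) ζ +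
        β * mittagLeffler α (β + 1) (-Complex.exp ζ) := by
  have hderiv : HasDerivAt (fun ξ ↦ mittagLeffler α (β + 1) (-Complex.exp ξ))
      (deriv (mittagLeffler α (β + 1)) (-Complex.exp ζ) * -Complex.exp ζ) ζ :=
    ((differentiable_mittagLeffler hα (β + 1)) _).hasDerivAt.comp ζ (Complex.hasDerivAt_exp ζ).neg
  rw [hderiv.deriv, mittagLeffler_eq_deriv_add hα]
  ring

theorem isBigO_mittagLeffler_neg_exp_of_add_one {α β δ δ' : ℝ} (hα : 0 < α) (hδ : δ < δ')
    (hO : (fun ζ ↦ mittagLeffler α (β + 1) (-Complex.exp ζ)) =O[𝓟 {ζ | |ζ.im| ≤ δ'}]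
      fun ζ ↦ (1 + Real.exp ζ.re)⁻¹) :
    (fun ζ ↦ mittagLeffler α β (-Complex.exp ζ)) =O[𝓟 {ζ | |ζ.im| ≤ δ}]
      fun ζ ↦ (1 + Real.exp ζ.re)⁻¹ := by
  have hdiff : Differentiable ℂ fun ζ ↦ mittagLeffler α (β + 1) (-Complex.exp ζ) :=
    (differentiable_mittagLeffler hα (β + 1)).comp (by fun_prop)
  have hmono : {ζ : ℂ | |ζ.im| ≤ δ} ⊆ {ζ | |ζ.im| ≤ δ'} := fun ζ hζ ↦ le_trans hζ hδ.le
  simp only [mittagLeffler_neg_exp_eq_deriv_add hα β]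
  exact ((isBigO_deriv_of_isBigO_inv_one_add_exp_re hδ hdiff.differentiableOn
    hO).const_mul_left _).add ((hO.mono (principal_mono.2 hmono)).const_mul_left _)

theorem isBigO_mittagLeffler_neg_exp {α : ℝ} (hα : 0 < α) (β : ℝ) {δ : ℝ}
    (hδ : δ < Real.pi - Real.pi * α / 2) :
    (fun ζ ↦ mittagLeffler α β (-Complex.exp ζ)) =O[𝓟 {ζ | |ζ.im| ≤ δ}]
      fun ζ ↦ (1 + Real.exp ζ.re)⁻¹ := by
  obtain ⟨n, hn⟩ := exists_nat_gt (1 + α - β)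
  induction n generalizing β δ with
  | zero =>
    exact isBigO_mittagLeffler_neg_exp_of_one_add_lt hα (by simpa using hn) hδ
  | succ n ih =>
    obtain ⟨δ', hδδ', hδ'⟩ := exists_between hδ
    refine isBigO_mittagLeffler_neg_exp_of_add_one hα hδδ' (ih (β + 1) hδ' ?_)
    push_cast at hn
    linarith

theorem mittagLeffler_decay_neg_real_general {α : ℝ} (hα : 0 < α) (β : ℝ) {δ : ℝ}
    (hδ : δ < Real.pi - Real.pi * α / 2) :
    ∃ C > 0, ∀ z : ℂ, |z.arg| ≤ δ → ‖mittagLeffler α β (-z)‖ ≤ C * (1 + ‖z‖)⁻¹ := by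
  obtain ⟨C, hC, hbound⟩ := (isBigO_mittagLeffler_neg_exp hα β hδ).exists_pos
  rw [isBigOWith_principal] at hbound
  refine ⟨C + ‖mittagLeffler α β 0‖, by positivity, fun z hz ↦ ?_⟩
  rcases eq_or_ne z 0 with rfl | hz0
  · simpa using hC.le
  calc ‖mittagLeffler α β (-z)‖ ≤ C * (1 + ‖z‖)⁻¹ := by
        simpa [Complex.exp_log hz0, Complex.log_re, Real.exp_log (norm_pos_iff.2 hz0),
          abs_of_pos (show 0 < 1 + ‖z‖ by positivity)] using
          hbound (Complex.log z) (by simpa [Complex.log_im] using hz)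
    _ ≤ _ := by
        gcongr
        exact le_add_of_nonneg_right (norm_nonneg _)

end Decay

/-- For `α ∈ (0,2)` and `β ∈ ℝ`, there is `C > 0` such that
`|E_{α,β}(−t)| ≤ C (1+t)⁻¹` for all real `t ≥ 0`. -/
theorem mittagLeffler_decay_neg_real (α β : ℝ) (hα : α ∈ Set.Ioo (0:ℝ) 2) :
    ∃ C > 0, ∀ t : ℝ, 0 ≤ t →
      ‖mittagLeffler α β (-(t : ℂ))‖ ≤ C * (1 + t)⁻¹ := by
  obtain ⟨C, hC, hdecay⟩ := mittagLeffler_decay_neg_real_general hα.1 β (δ := 0)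
    (by nlinarith [Real.pi_pos, hα.2])
  exact ⟨C, hC, fun t ht ↦ by
    simpa [abs_of_nonneg ht] using hdecay t (by simp [Complex.arg_ofReal_of_nonneg ht])⟩
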